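/- For the unweighted three-dimensional step set S = {(1,0,1), (-1,0,1), (0,1,-1), (0,-1,-1)}, the number s_n of walks of length n taking steps in S, starting at the origin, and remaining in ℕ^3 satisfies s_n = (4^n / n^{3/2}) · ( 4√2/π^{3/2} + O(1/n) ) as n → ∞; in particular the n^{-1/2}-order correction term in the asymptotic expansion vanishes. -/

import Mathlib

open Finset Filter
open scoped Classical Real

noncomputable section

/-- The number of walks of length `n` with steps in `S`, starting at the origin and
never leaving `ℕ^d` (all partial sums have nonnegative coordinates). -/
def numWalks (d : ℕ) (S : Finset (Fin d → ℤ)) (n : ℕ) : ℕ :=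
  Finset.card (Finset.univ.filter fun f : Fin n → {i // i ∈ S} =>
    ∀ m : ℕ, m ≤ n → ∀ j : Fin d,
      0 ≤ ∑ k ∈ Finset.univ.filter (fun k : Fin n => (k : ℕ) < m), ((f k : Fin d → ℤ) j))

/-- Total weight of walks of length `n` with steps in `S` (weighted by `w`),
starting at the origin and never leaving `ℕ^d`. -/
def walkWeight (d : ℕ) (S : Finset (Fin d → ℤ)) (w : (Fin d → ℤ) → ℝ) (n : ℕ) : ℝ :=
  ∑ f : Fin n → {i // i ∈ S},
    if ∀ m : ℕ, m ≤ n → ∀ j : Fin d,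
        0 ≤ ∑ k ∈ Finset.univ.filter (fun k : Fin n => (k : ℕ) < m), ((f k : Fin d → ℤ) j)
    then ∏ k : Fin n, w (f k) else 0

/-!
The third coordinate of an octant walk is a meander, i.e. a walk on `ℕ` with steps `±1`. If it has
`a` upward and `b` downward steps, then the first and second coordinates are independent walks on
`ℕ` of lengths `a` and `b`, so that `s_n = ∑ r a * r b` over all meanders of length `n`, where
`r m = m.choose (m / 2)` counts the walks of length `m` on `ℕ`. The Wallis product gives
`r a * r b = 2 ^ n * 4 / (π * n) * (1 + O(1 / n))` on average: as `a + b = n` is fixed, the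
deviation depends on the height `a - b` only through its square, hence has no term of relative order
`n ^ (-1 / 2)`. It is bounded by a combination of the odd powers of `a - b + 1`, whose sums over
meanders are explicit because `z + 1` satisfies `(z + 2) + z = 2 * (z + 1)` and vanishes at
`z = -1`. Finally there are `r n = 2 ^ n * √(2 / (π * n)) * (1 + O(1 / n))` meanders.
-/

section Walks

variable {d n : ℕ}

/-- The walk with steps `f` starting at `x` stays in the nonnegative orthant. The partial sums are
encoded as in `numWalks`. -/
def StaysNonneg (x : Fin d → ℤ) (f : Fin n → Fin d → ℤ) : Prop :=
  ∀ m : ℕ, m ≤ n → ∀ j : Fin d,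
    0 ≤ x j + ∑ k ∈ Finset.univ.filter (fun k : Fin n => (k : ℕ) < m), f k j

/-- The generalization of `numWalks` to an arbitrary starting point, which makes the count
recursive in the first step. -/
def numWalksFrom (S : Finset (Fin d → ℤ)) (n : ℕ) (x : Fin d → ℤ) : ℕ :=
  Finset.card (Finset.univ.filter fun f : Fin n → {i // i ∈ S} =>
    StaysNonneg x fun k => (f k : Fin d → ℤ))

lemma StaysNonneg.start_nonneg {x : Fin d → ℤ} {f : Fin n → Fin d → ℤ} (h : StaysNonneg x f) :
    0 ≤ x :=
  fun j => by simpa using h 0 n.zero_le j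

lemma sum_filter_val_lt_succ {M : Type*} [AddCommMonoid M] (f : Fin (n + 1) → M) (m : ℕ) :
    ∑ k ∈ univ.filter (fun k : Fin (n + 1) => (k : ℕ) < m + 1), f k =
      f 0 + ∑ k ∈ univ.filter (fun k : Fin n => (k : ℕ) < m), Fin.tail f k := by
  simp [Finset.sum_filter, Fin.sum_univ_succ, Fin.tail]

lemma staysNonneg_succ_iff {x : Fin d → ℤ} {f : Fin (n + 1) → Fin d → ℤ} :
    StaysNonneg x f ↔ 0 ≤ x ∧ StaysNonneg (x + f 0) (Fin.tail f) := by
  have h_shift (m : ℕ) (j : Fin d) :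
      x j + ∑ k ∈ univ.filter (fun k : Fin (n + 1) => (k : ℕ) < m + 1), f k j =
        (x + f 0) j + ∑ k ∈ univ.filter (fun k : Fin n => (k : ℕ) < m), Fin.tail f k j := by
    rw [sum_filter_val_lt_succ fun k => f k j, Pi.add_apply, add_assoc]
    rfl
  refine ⟨fun h => ⟨h.start_nonneg, fun m hm j => ?_⟩, fun ⟨hx, h⟩ m hm j => ?_⟩
  · rw [← h_shift]
    exact h (m + 1) (by lia) j
  · rcases m with _ | m
    · simpa using hx j
    · rw [h_shift]
      exact h m (by lia) j

lemma numWalks_eq_numWalksFrom_zero (S : Finset (Fin d → ℤ)) (n : ℕ) :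
    numWalks d S n = numWalksFrom S n 0 := by
  simp [numWalks, numWalksFrom, StaysNonneg]

lemma numWalksFrom_eq_zero (S : Finset (Fin d → ℤ)) (n : ℕ) {x : Fin d → ℤ} (j : Fin d)
    (hj : x j < 0) : numWalksFrom S n x = 0 := by
  rw [numWalksFrom, Finset.card_eq_zero, Finset.filter_eq_empty_iff]
  exact fun f _ hf => hj.not_ge (hf.start_nonneg j)

lemma numWalksFrom_zero (S : Finset (Fin d → ℤ)) {x : Fin d → ℤ} (hx : 0 ≤ x) :
    numWalksFrom S 0 x = 1 := by
  have h (f : Fin 0 → Fin d → ℤ) : StaysNonneg x f := fun m _ j => by simpa using hx j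
  simp [numWalksFrom, h]

lemma numWalksFrom_succ (S : Finset (Fin d → ℤ)) (n : ℕ) {x : Fin d → ℤ} (hx : 0 ≤ x) :
    numWalksFrom S (n + 1) x = ∑ s ∈ S, numWalksFrom S n (x + s) := by
  simp only [numWalksFrom, Finset.card_filter]
  rw [← Finset.sum_coe_sort S,
    ← (Fin.consEquiv fun _ : Fin (n + 1) => {i // i ∈ S}).sum_comp, Fintype.sum_prod_type]
  refine Fintype.sum_congr _ _ fun s => Fintype.sum_congr _ _ fun f => ?_
  simp only [staysNonneg_succ_iff, hx, true_and]
  rfl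

end Walks

section Meanders

/-- The sum of `F a b` over all walks on `ℕ` with `n` steps `±1` starting at `z`, where `a` and `b`
are the numbers of steps `+1` and `-1`. The recursion removes the first step. -/
def meanderSum {M : Type*} [AddCommMonoid M] : ℕ → (ℕ → ℕ → M) → ℕ → M
  | 0, F, _ => F 0 0
  | n + 1, F, 0 => meanderSum n (fun a => F (a + 1)) 1
  | n + 1, F, z + 1 =>
    meanderSum n (fun a => F (a + 1)) (z + 2) + meanderSum n (fun a b => F a (b + 1)) z

/-- The number of walks on `ℕ` with `n` steps `±1` starting at `z`. -/
def halfLineWalks (n z : ℕ) : ℕ := meanderSum n (fun _ _ => 1) z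

lemma halfLineWalks_zero (z : ℕ) : halfLineWalks 0 z = 1 := rfl

lemma halfLineWalks_succ_zero (n : ℕ) : halfLineWalks (n + 1) 0 = halfLineWalks n 1 := rfl

lemma halfLineWalks_succ_succ (n z : ℕ) :
    halfLineWalks (n + 1) (z + 1) = halfLineWalks n (z + 2) + halfLineWalks n z := rfl

section AddCommMonoid

variable {M N : Type*} [AddCommMonoid M] [AddCommMonoid N]

lemma meanderSum_add (n : ℕ) (F G : ℕ → ℕ → M) (z : ℕ) :
    meanderSum n (fun a b => F a b + G a b) z = meanderSum n F z + meanderSum n G z := by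
  induction n generalizing F G z with
  | zero => rfl
  | succ n ih => cases z <;> simp only [meanderSum, ih, add_add_add_comm]

lemma map_meanderSum (φ : M →+ N) (n : ℕ) (F : ℕ → ℕ → M) (z : ℕ) :
    φ (meanderSum n F z) = meanderSum n (fun a b => φ (F a b)) z := by
  induction n generalizing F z with
  | zero => rfl
  | succ n ih => cases z <;> simp only [meanderSum, map_add, ih]

lemma meanderSum_mono [PartialOrder M] [IsOrderedAddMonoid M] {n z : ℕ} {F G : ℕ → ℕ → M}
    (h : ∀ a b, a + b = n → b ≤ z + a → F a b ≤ G a b) :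
    meanderSum n F z ≤ meanderSum n G z := by
  induction n generalizing F G z with
  | zero => exact h 0 0 rfl (Nat.zero_le _)
  | succ n ih =>
    cases z with
    | zero => exact ih fun a b _ _ => h _ _ (by lia) (by lia)
    | succ z =>
      exact add_le_add (ih fun a b _ _ => h _ _ (by lia) (by lia))
        (ih fun a b _ _ => h _ _ (by lia) (by lia))

lemma meanderSum_height_eq {g : ℤ → M} {h : ℕ → ℕ → M} (h_init : ∀ z : ℕ, h 0 z = g z)
    (h_zero : ∀ n, h (n + 1) 0 = h n 1)
    (h_succ : ∀ n z, h (n + 1) (z + 1) = h n (z + 2) + h n z) (n z : ℕ) :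
    meanderSum n (fun a b => g (z + a - b)) z = h n z := by
  induction n generalizing z with
  | zero => simp [meanderSum, h_init]
  | succ n ih =>
    cases z with
    | zero =>
      rw [h_zero, ← ih, meanderSum]
      congr! 4
      push_cast
      ring
    | succ z =>
      rw [h_succ, ← ih, ← ih, meanderSum]
      congr! 5 <;> push_cast <;> ring

end AddCommMonoid

lemma meanderSum_mul_left {R : Type*} [NonUnitalNonAssocSemiring R] (n : ℕ) (c : R)
    (F : ℕ → ℕ → R) (z : ℕ) :
    meanderSum n (fun a b => c * F a b) z = c * meanderSum n F z :=
  (map_meanderSum (AddMonoidHom.mulLeft c) n F z).symm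

lemma meanderSum_one {R : Type*} [Semiring R] (n z : ℕ) :
    meanderSum n (fun _ _ => (1 : R)) z = halfLineWalks n z := by
  simpa [halfLineWalks] using (map_meanderSum (Nat.castAddMonoidHom R) n (fun _ _ => 1) z).symm

lemma abs_meanderSum_sub_le {R : Type*} [AddCommGroup R] [LinearOrder R] [IsOrderedAddMonoid R]
    {n z : ℕ} {F G E : ℕ → ℕ → R}
    (h : ∀ a b, a + b = n → b ≤ z + a → |F a b - G a b| ≤ E a b) :
    |meanderSum n F z - meanderSum n G z| ≤ meanderSum n E z := by
  rw [abs_sub_le_iff, sub_le_iff_le_add, sub_le_iff_le_add, ← meanderSum_add, ← meanderSum_add]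
  exact ⟨meanderSum_mono fun a b hab hb =>
      sub_le_iff_le_add.1 (abs_sub_le_iff.1 (h a b hab hb)).1,
    meanderSum_mono fun a b hab hb => sub_le_iff_le_add.1 (abs_sub_le_iff.1 (h a b hab hb)).2⟩

section HeightMoments

variable {R : Type*} [CommRing R] (n z : ℕ)

lemma meanderSum_height :
    meanderSum n (fun a b => (z + a - b + 1 : R)) z = 2 ^ n * (z + 1) := by
  simpa using meanderSum_height_eq (g := fun y => (y + 1 : R))
    (h := fun n z => 2 ^ n * (z + 1 : R)) (by simp) (fun n => by push_cast; ring)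
    (fun n z => by push_cast; ring) n z

lemma meanderSum_height_pow_three :
    meanderSum n (fun a b => (z + a - b + 1 : R) ^ 3) z =
      2 ^ n * ((z + 1) ^ 3 + 3 * n * (z + 1)) := by
  simpa using meanderSum_height_eq (g := fun y => (y + 1 : R) ^ 3)
    (h := fun n z => 2 ^ n * ((z + 1 : R) ^ 3 + 3 * n * (z + 1))) (by simp)
    (fun n => by push_cast; ring) (fun n z => by push_cast; ring) n z

lemma meanderSum_height_pow_five :
    meanderSum n (fun a b => (z + a - b + 1 : R) ^ 5) z =
      2 ^ n * ((z + 1) ^ 5 + 10 * n * (z + 1) ^ 3 + (15 * n ^ 2 - 10 * n) * (z + 1)) := by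
  simpa using meanderSum_height_eq (g := fun y => (y + 1 : R) ^ 5)
    (h := fun n z =>
      2 ^ n * ((z + 1 : R) ^ 5 + 10 * n * (z + 1) ^ 3 + (15 * n ^ 2 - 10 * n) * (z + 1)))
    (by simp) (fun n => by push_cast; ring) (fun n z => by push_cast; ring) n z

end HeightMoments

lemma sum_range_choose_succ (n m : ℕ) :
    ∑ i ∈ range m, (n + 1).choose i =
      ∑ i ∈ range m, n.choose i + ∑ i ∈ range (m - 1), n.choose i := by
  cases m with
  | zero => rfl
  | succ m =>
    simp only [Finset.sum_range_succ' _ m, Nat.choose_succ_succ', Finset.sum_add_distrib,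
      Nat.choose_zero_right, Nat.add_sub_cancel]
    ring

-- Reflection principle; the truncation of `(n + z) / 2 - z` for `n < z` is intended.
lemma halfLineWalks_add_sum_range_choose (n z : ℕ) :
    halfLineWalks n z + ∑ i ∈ range ((n + z) / 2 - z), n.choose i =
      ∑ i ∈ range ((n + z) / 2 + 1), n.choose i := by
  induction n generalizing z with
  | zero =>
    rw [show (0 + z) / 2 - z = 0 by lia]
    simp [halfLineWalks_zero, Finset.sum_range_succ']
  | succ n ih =>
    rw [sum_range_choose_succ, sum_range_choose_succ]
    cases z with
    | zero =>
      have := ih 1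
      simp only [halfLineWalks_succ_zero, add_zero, Nat.sub_zero, Nat.add_sub_cancel] at this ⊢
      lia
    | succ z =>
      have up := ih (z + 2)
      have down := ih z
      rw [show (n + (z + 2)) / 2 = (n + 1 + (z + 1)) / 2 by lia] at up
      rw [show (n + z) / 2 + 1 = (n + 1 + (z + 1)) / 2 by lia,
        show (n + z) / 2 - z = (n + 1 + (z + 1)) / 2 - (z + 1) by lia] at down
      rw [halfLineWalks_succ_succ, Nat.add_sub_cancel, Nat.sub_sub]
      lia

lemma halfLineWalks_zero_right (n : ℕ) : halfLineWalks n 0 = n.choose (n / 2) := by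
  have h := halfLineWalks_add_sum_range_choose n 0
  rw [add_zero, Nat.sub_zero, Finset.sum_range_succ] at h
  lia

end Meanders

section OctantWalks

/-- The step set of the theorem: every step moves the third coordinate, an upward step being paired
with a step along the first axis and a downward step with one along the second. -/
abbrev octantSteps : Finset (Fin 3 → ℤ) := {![1, 0, 1], ![-1, 0, 1], ![0, 1, -1], ![0, -1, -1]}

lemma numWalksFrom_octantSteps_succ (n : ℕ) {x y z : ℤ} (hx : 0 ≤ x) (hy : 0 ≤ y) (hz : 0 ≤ z) :
    numWalksFrom octantSteps (n + 1) ![x, y, z] =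
      (numWalksFrom octantSteps n ![x + 1, y, z + 1] +
        numWalksFrom octantSteps n ![x - 1, y, z + 1]) +
      (numWalksFrom octantSteps n ![x, y + 1, z - 1] +
        numWalksFrom octantSteps n ![x, y - 1, z - 1]) := by
  have h_nonneg : 0 ≤ ![x, y, z] := by
    simp [Pi.le_def, Fin.forall_fin_succ, hx, hy, hz]
  have h_sum (F : (Fin 3 → ℤ) → ℕ) : ∑ s ∈ octantSteps, F s =
      (F ![1, 0, 1] + F ![-1, 0, 1]) + (F ![0, 1, -1] + F ![0, -1, -1]) := by
    simp [octantSteps, Finset.sum_insert, Matrix.vecCons_inj, add_assoc]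
  rw [numWalksFrom_succ _ _ h_nonneg, h_sum]
  simp [sub_eq_add_neg]

lemma neighbor_sum_eq_meanderSum {n z : ℕ} (i w : ℕ → ℕ → ℕ) {N : ℤ → ℕ} (h_neg : N (-1) = 0)
    (hN : ∀ x : ℕ, N x = meanderSum n (fun a b => halfLineWalks (i a b) x * w a b) z) (x : ℕ) :
    N (x + 1) + N (x - 1) =
      meanderSum n (fun a b => halfLineWalks (i a b + 1) x * w a b) z := by
  cases x with
  | zero => simpa [h_neg, halfLineWalks_succ_zero] using hN 1
  | succ x =>
    simp only [halfLineWalks_succ_succ, add_mul, meanderSum_add, ← hN]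
    push_cast
    ring_nf

lemma numWalksFrom_octantSteps (n x y z : ℕ) :
    numWalksFrom octantSteps n ![(x : ℤ), y, z] =
      meanderSum n (fun a b => halfLineWalks a x * halfLineWalks b y) z := by
  induction n generalizing x y z with
  | zero => exact numWalksFrom_zero _ (by simp [Pi.le_def, Fin.forall_fin_succ])
  | succ n ih =>
    have up (z : ℕ) : numWalksFrom octantSteps n ![(x : ℤ) + 1, y, z] +
        numWalksFrom octantSteps n ![(x : ℤ) - 1, y, z] =
          meanderSum n (fun a b => halfLineWalks (a + 1) x * halfLineWalks b y) z :=
      neighbor_sum_eq_meanderSum (fun a _ => a) _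
        (N := fun x => numWalksFrom octantSteps n ![x, y, z])
        (numWalksFrom_eq_zero _ _ 0 (by simp)) (fun x => ih x y z) x
    have down (z : ℕ) : numWalksFrom octantSteps n ![(x : ℤ), y + 1, z] +
        numWalksFrom octantSteps n ![(x : ℤ), y - 1, z] =
          meanderSum n (fun a b => halfLineWalks a x * halfLineWalks (b + 1) y) z := by
      simp only [mul_comm (halfLineWalks _ x)]
      exact neighbor_sum_eq_meanderSum (fun _ b => b) _
        (N := fun y => numWalksFrom octantSteps n ![(x : ℤ), y, z])
        (numWalksFrom_eq_zero _ _ 1 (by simp)) (fun y => by simpa only [mul_comm] using ih x y z) y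
    rw [numWalksFrom_octantSteps_succ _ x.cast_nonneg y.cast_nonneg z.cast_nonneg]
    cases z with
    | zero =>
      rw [numWalksFrom_eq_zero _ _ (x := ![(x : ℤ), y + 1, ((0 : ℕ) : ℤ) - 1]) 2 (by simp),
        numWalksFrom_eq_zero _ _ (x := ![(x : ℤ), y - 1, ((0 : ℕ) : ℤ) - 1]) 2 (by simp)]
      simpa [meanderSum] using up 1
    | succ z =>
      rw [meanderSum, ← up, ← down]
      push_cast
      ring_nf

lemma numWalks_octantSteps (n : ℕ) :
    numWalks 3 octantSteps n =
      meanderSum n (fun a b => halfLineWalks a 0 * halfLineWalks b 0) 0 := by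
  rw [numWalks_eq_numWalksFrom_zero, ← numWalksFrom_octantSteps]
  congr 1
  simp [← List.ofFn_inj]

end OctantWalks

section SurvivalProb

/-- The probability that the simple random walk on `ℤ` started at `0` stays nonnegative during its
first `n` steps. -/
def survivalProb (n : ℕ) : ℝ := halfLineWalks n 0 / 2 ^ n

lemma survivalProb_eq_choose (n : ℕ) : survivalProb n = n.choose (n / 2) / 2 ^ n := by
  rw [survivalProb, halfLineWalks_zero_right]

lemma survivalProb_pos (n : ℕ) : 0 < survivalProb n := by
  have : 0 < n.choose (n / 2) := Nat.choose_pos (Nat.div_le_self n 2)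
  rw [survivalProb_eq_choose]
  positivity

lemma survivalProb_le_one (n : ℕ) : survivalProb n ≤ 1 := by
  rw [survivalProb_eq_choose, div_le_one₀ (by positivity)]
  exact_mod_cast Nat.choose_le_two_pow n (n / 2)

lemma survivalProb_odd (m : ℕ) : survivalProb (2 * m + 1) = survivalProb (2 * (m + 1)) := by
  have h_choose : (2 * m + 2).choose (m + 1) = 2 * (2 * m + 1).choose m := by
    rw [Nat.choose_succ_succ (2 * m + 1) m, Nat.choose_symm_half]
    ring
  rw [survivalProb_eq_choose, survivalProb_eq_choose, show (2 * m + 1) / 2 = m by lia,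
    show 2 * (m + 1) / 2 = m + 1 by lia, mul_add_one, h_choose, pow_succ 2 (2 * m + 1)]
  push_cast
  field_simp

lemma survivalProb_even_sq_mul_wallis (m : ℕ) :
    survivalProb (2 * m) ^ 2 * (2 * m + 1) * Real.Wallis.W m = 1 := by
  have h_choose : ((2 * m).choose m : ℝ) = (2 * m).factorial / (m.factorial : ℝ) ^ 2 := by
    rw [Nat.cast_choose ℝ (by lia), show 2 * m - m = m by lia, sq]
  rw [survivalProb_eq_choose, Nat.mul_div_cancel_left m two_pos, h_choose,
    Real.Wallis.W_eq_factorial_ratio, show 4 * m = 2 * m + 2 * m by ring, pow_add]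
  field_simp

lemma two_le_survivalProb_even_sq (m : ℕ) : 2 ≤ π * (2 * m + 1) * survivalProb (2 * m) ^ 2 := by
  have h : 0 ≤ survivalProb (2 * m) ^ 2 * (2 * m + 1) := by positivity
  linarith [survivalProb_even_sq_mul_wallis m,
    mul_le_mul_of_nonneg_left (Real.Wallis.W_le m) h]

lemma survivalProb_even_sq_le_two (m : ℕ) : π * (2 * m) * survivalProb (2 * m) ^ 2 ≤ 2 := by
  have h_ratio : (2 * m : ℝ) ≤ (2 * m + 1) * ((2 * m + 1) / (2 * m + 2)) := by
    rw [← mul_div_assoc, le_div_iff₀ (by positivity)]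
    linarith
  have h : 0 ≤ survivalProb (2 * m) ^ 2 * (2 * m + 1) := by positivity
  have h_pi : 0 ≤ π * survivalProb (2 * m) ^ 2 := by positivity
  linarith [survivalProb_even_sq_mul_wallis m, mul_le_mul_of_nonneg_left h_ratio h_pi,
    mul_le_mul_of_nonneg_left (Real.Wallis.le_W m) h]

lemma two_le_survivalProb_sq (n : ℕ) : 2 ≤ π * (n + 2) * survivalProb n ^ 2 := by
  obtain ⟨m, rfl | rfl⟩ := n.even_or_odd'
  · refine (two_le_survivalProb_even_sq m).trans ?_
    push_cast
    gcongr
    norm_num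
  · rw [survivalProb_odd]
    refine (two_le_survivalProb_even_sq (m + 1)).trans_eq ?_
    push_cast
    ring

lemma survivalProb_sq_le_two (n : ℕ) : π * n * survivalProb n ^ 2 ≤ 2 := by
  obtain ⟨m, rfl | rfl⟩ := n.even_or_odd'
  · exact_mod_cast survivalProb_even_sq_le_two m
  · rw [survivalProb_odd]
    refine le_trans ?_ (survivalProb_even_sq_le_two (m + 1))
    push_cast
    gcongr
    linarith

lemma survivalProb_le_sqrt {n : ℕ} (hn : 0 < n) : survivalProb n ≤ √(2 / (π * n)) := by
  refine Real.le_sqrt_of_sq_le ?_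
  rw [le_div_iff₀ (by positivity)]
  linarith [survivalProb_sq_le_two n]

lemma sqrt_mul_le_survivalProb {n : ℕ} (hn : 0 < n) :
    √(2 / (π * n)) * (n / (n + 2)) ≤ survivalProb n := by
  refine le_of_sq_le_sq ?_ (survivalProb_pos n).le
  have h_ratio : (n / (n + 2) : ℝ) ^ 2 ≤ n / (n + 2) := by
    refine pow_le_of_le_one (by positivity) ?_ two_ne_zero
    rw [div_le_one₀ (by positivity)]
    linarith
  calc (√(2 / (π * n)) * (n / (n + 2))) ^ 2
      ≤ 2 / (π * n) * (n / (n + 2)) := by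
        rw [mul_pow, Real.sq_sqrt (by positivity)]
        gcongr
    _ = 2 / (π * (n + 2)) := by field_simp
    _ ≤ survivalProb n ^ 2 := by
        rw [div_le_iff₀ (by positivity)]
        linarith [two_le_survivalProb_sq n]

lemma sqrt_two_div_pi_mul_le {x : ℝ} (hx : 0 < x) : √(2 / (π * x)) ≤ 1 / √x := by
  rw [← Real.sqrt_one, ← Real.sqrt_div zero_le_one]
  refine Real.sqrt_le_sqrt ?_
  rw [div_le_div_iff₀ (by positivity) hx]
  nlinarith [Real.pi_gt_three]

lemma abs_survivalProb_sub_sqrt_le {n : ℕ} (hn : 0 < n) :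
    |survivalProb n - √(2 / (π * n))| ≤ 2 / (n * √n) := by
  have hn' : (0 : ℝ) < n := Nat.cast_pos.2 hn
  have h_upper := survivalProb_le_sqrt hn
  rw [abs_sub_comm, abs_of_nonneg (sub_nonneg.2 h_upper)]
  calc √(2 / (π * n)) - survivalProb n
      ≤ √(2 / (π * n)) * (1 - n / (n + 2)) := by linarith [sqrt_mul_le_survivalProb hn]
    _ = √(2 / (π * n)) * (2 / (n + 2)) := by field_simp; ring
    _ ≤ 1 / √n * (2 / n) := by
        gcongr
        · exact sqrt_two_div_pi_mul_le hn'
        · linarith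
    _ = 2 / (n * √n) := by ring

end SurvivalProb

section ProductEstimate

variable {a b n : ℕ}

lemma div_le_survivalProb_mul (h : a + b = n) :
    4 / (π * (n + 4)) ≤ survivalProb a * survivalProb b := by
  have ha := survivalProb_pos a
  have hb := survivalProb_pos b
  have hn : (n : ℝ) = a + b := by exact_mod_cast h.symm
  rw [div_le_iff₀ (by positivity)]
  refine le_of_sq_le_sq ?_ (by positivity)
  calc (4 : ℝ) ^ 2 = 4 * (2 * 2) := by norm_num
    _ ≤ 4 * ((π * (a + 2) * survivalProb a ^ 2) * (π * (b + 2) * survivalProb b ^ 2)) := by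
        gcongr
        · exact two_le_survivalProb_sq a
        · exact two_le_survivalProb_sq b
    _ = (π * (survivalProb a * survivalProb b)) ^ 2 * (4 * (a + 2) * (b + 2)) := by ring
    _ ≤ (π * (survivalProb a * survivalProb b)) ^ 2 * (n + 4) ^ 2 := by
        gcongr
        rw [hn]
        linarith [sq_nonneg ((a : ℝ) - b)]
    _ = (survivalProb a * survivalProb b * (π * (n + 4))) ^ 2 := by ring

lemma survivalProb_mul_sq_le (h : a + b = n) :
    ((n : ℝ) ^ 2 - ((a : ℝ) - b) ^ 2) * (π * (survivalProb a * survivalProb b)) ^ 2 ≤ 4 ^ 2 := by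
  have hn : (n : ℝ) = a + b := by exact_mod_cast h.symm
  calc ((n : ℝ) ^ 2 - ((a : ℝ) - b) ^ 2) * (π * (survivalProb a * survivalProb b)) ^ 2
      = 4 * ((π * a * survivalProb a ^ 2) * (π * b * survivalProb b ^ 2)) := by rw [hn]; ring
    _ ≤ 4 * (2 * 2) := by
        gcongr
        · exact survivalProb_sq_le_two a
        · exact survivalProb_sq_le_two b
    _ = 4 ^ 2 := by norm_num

-- The factor bounds `n / √(n² - y²)`; its quartic term absorbs the blow-up as `y` approaches `n`.
lemma sq_le_sub_mul_sq {x y : ℝ} (hx : 0 < x) (hxy : x ≤ x ^ 2 - y ^ 2) :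
    x ^ 2 ≤ (x ^ 2 - y ^ 2) * (1 + (y ^ 2 / x ^ 2 + y ^ 4 / x ^ 3)) ^ 2 := by
  set G := 1 + (y ^ 2 / x ^ 2 + y ^ 4 / x ^ 3) with hG
  have hG_ge : 1 ≤ G := le_add_of_nonneg_right (by positivity)
  have h_expand : (x ^ 2 - y ^ 2) * G = x ^ 2 + y ^ 4 / x ^ 3 * (x ^ 2 - y ^ 2 - x) := by
    rw [hG]
    field_simp
    ring
  calc x ^ 2 ≤ (x ^ 2 - y ^ 2) * G := by
        rw [h_expand]
        exact le_add_of_nonneg_right (mul_nonneg (by positivity) (sub_nonneg.2 hxy))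
    _ ≤ (x ^ 2 - y ^ 2) * G ^ 2 :=
        mul_le_mul_of_nonneg_left (le_self_pow₀ hG_ge two_ne_zero) (hx.le.trans hxy)

lemma survivalProb_mul_le (hn : 0 < n) (h : a + b = n) :
    survivalProb a * survivalProb b ≤
      4 / (π * n) * (1 + (((a : ℝ) - b) ^ 2 / n ^ 2 + ((a : ℝ) - b) ^ 4 / n ^ 3)) := by
  have hn' : (0 : ℝ) < n := Nat.cast_pos.2 hn
  have hab : (n : ℝ) = a + b := by exact_mod_cast h.symm
  set y := (a : ℝ) - b with hy
  by_cases h_zero : a = 0 ∨ b = 0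
  · have hy_sq : y ^ 2 = n ^ 2 := by
      rcases h_zero with rfl | rfl <;> simp [hy, hab]
    have h_value : 4 / (π * n) * (1 + (y ^ 2 / n ^ 2 + y ^ 4 / n ^ 3)) =
        4 / π + 8 / (π * n) := by
      rw [show y ^ 4 = (y ^ 2) ^ 2 by ring, hy_sq]
      field_simp
      ring
    rw [h_value]
    calc survivalProb a * survivalProb b
        ≤ 1 := mul_le_one₀ (survivalProb_le_one a) (survivalProb_pos b).le (survivalProb_le_one b)
      _ ≤ 4 / π := by rw [le_div_iff₀ Real.pi_pos, one_mul]; exact Real.pi_le_four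
      _ ≤ 4 / π + 8 / (π * n) := le_add_of_nonneg_right (by positivity)
  · obtain ⟨ha, hb⟩ := not_or.1 h_zero
    have ha' : (1 : ℝ) ≤ a := by exact_mod_cast Nat.one_le_iff_ne_zero.2 ha
    have hb' : (1 : ℝ) ≤ b := by exact_mod_cast Nat.one_le_iff_ne_zero.2 hb
    have h_away : (n : ℝ) ≤ n ^ 2 - y ^ 2 := by
      rw [hab, hy]
      nlinarith
    set G := 1 + (y ^ 2 / n ^ 2 + y ^ 4 / (n : ℝ) ^ 3)
    set P := survivalProb a * survivalProb b
    have h_sq : (n * (π * P)) ^ 2 ≤ (4 * G) ^ 2 := calc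
      (n * (π * P)) ^ 2 = (n : ℝ) ^ 2 * (π * P) ^ 2 := by ring
      _ ≤ (n ^ 2 - y ^ 2) * G ^ 2 * (π * P) ^ 2 := by
          gcongr
          exact sq_le_sub_mul_sq hn' h_away
      _ = (n ^ 2 - y ^ 2) * (π * P) ^ 2 * G ^ 2 := by ring
      _ ≤ 4 ^ 2 * G ^ 2 := by
          gcongr
          exact survivalProb_mul_sq_le h
      _ = (4 * G) ^ 2 := by ring
    rw [div_mul_eq_mul_div, le_div_iff₀ (by positivity)]
    linarith [le_of_sq_le_sq h_sq (by positivity)]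

lemma sq_add_pow_four_le {t : ℝ} (ht : 0 ≤ t) : t ^ 2 + t ^ 4 ≤ (t + 2 * t ^ 3 + t ^ 5) / 2 := by
  have : 0 ≤ t * (1 + t ^ 2) * (1 - t) ^ 2 := by positivity
  linarith

/-- A bound for the deviation of `survivalProb a * survivalProb b` from `4 / (π * n)`, relative to
`4 / (π * n)` and up to a factor `1 / n`, in terms of the height `a - b` of a meander. It is chosen
odd in `t` because the odd moments of `a - b + 1` over meanders are explicit. -/
def productError (n a b : ℕ) : ℝ :=
  let t : ℝ := ((a : ℝ) - b + 1) / √n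
  4 + (t + 2 * t ^ 3 + t ^ 5) / 2

lemma sq_div_add_pow_four_div_le {x y : ℝ} (hx : 0 < x) (hy : 0 ≤ y) {t : ℝ}
    (ht : t = (y + 1) / √x) :
    y ^ 2 / x ^ 2 + y ^ 4 / x ^ 3 ≤ (t + 2 * t ^ 3 + t ^ 5) / 2 / x := by
  have h_sqrt : √x ^ 4 = x ^ 2 := by rw [show √x ^ 4 = (√x ^ 2) ^ 2 by ring, Real.sq_sqrt hx.le]
  calc y ^ 2 / x ^ 2 + y ^ 4 / x ^ 3
      = ((y / √x) ^ 2 + (y / √x) ^ 4) / x := by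
        rw [div_pow, div_pow, h_sqrt, Real.sq_sqrt hx.le]
        field_simp
    _ ≤ (t ^ 2 + t ^ 4) / x := by
        have : y / √x ≤ t := by
          rw [ht]
          gcongr
          linarith
        gcongr
    _ ≤ (t + 2 * t ^ 3 + t ^ 5) / 2 / x := by
        gcongr
        exact sq_add_pow_four_le (ht ▸ by positivity)

lemma abs_survivalProb_mul_sub_le (hn : 0 < n) (h : a + b = n) (hba : b ≤ a) :
    |survivalProb a * survivalProb b - 4 / (π * n)| ≤ 4 / (π * n) * (productError n a b / n) := by
  have hn' : (0 : ℝ) < n := Nat.cast_pos.2 hn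
  have hy : 0 ≤ (a : ℝ) - b := sub_nonneg.2 (Nat.cast_le.2 hba)
  have h_lower : 4 / (π * n) * (1 - 4 / n) ≤ survivalProb a * survivalProb b := by
    refine le_trans ?_ (div_le_survivalProb_mul h)
    have h_gap : 4 / (π * (n + 4)) - 4 / (π * n) * (1 - 4 / n) =
        64 / (π * n ^ 2 * (n + 4)) := by
      field_simp
      ring
    exact sub_nonneg.1 (h_gap ▸ by positivity)
  have h_upper := survivalProb_mul_le hn h
  have h_odd := sq_div_add_pow_four_div_le hn' hy rfl
  rw [productError]
  set t := ((a : ℝ) - b + 1) / √n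
  have h_odd_nonneg : 0 ≤ 4 / (π * n) * ((t + 2 * t ^ 3 + t ^ 5) / 2 / n) := by positivity
  have h_scaled := mul_le_mul_of_nonneg_left h_odd (by positivity : 0 ≤ 4 / (π * n))
  have h_four_nonneg : 0 ≤ 4 / (π * n) * (4 / n) := by positivity
  rw [add_div, abs_sub_le_iff]
  constructor <;> linarith

end ProductEstimate

section Asymptotics

variable {n : ℕ}

lemma meanderSum_productError_le (hn : 0 < n) :
    meanderSum n (productError n) 0 ≤ 2 ^ n * (33 / 2 / √n) := by
  have hn' : (1 : ℝ) ≤ n := Nat.one_le_cast.2 hn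
  have h_sqrt : √(n : ℝ) ^ 2 = n := Real.sq_sqrt n.cast_nonneg
  set s := √(n : ℝ) with hs
  have hs_pos : 0 < s := Real.sqrt_pos.2 (by positivity)
  have h_linear : productError n = fun a b : ℕ => 4 * 1 + (1 / (2 * s) * ((a : ℝ) - b + 1) +
      (1 / s ^ 3 * ((a : ℝ) - b + 1) ^ 3 + 1 / (2 * s ^ 5) * ((a : ℝ) - b + 1) ^ 5)) := by
    funext a b
    simp only [productError, ← hs]
    ring
  have h_one : meanderSum n (fun a b => (a - b + 1 : ℝ)) 0 = 2 ^ n := by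
    simpa using meanderSum_height (R := ℝ) n 0
  have h_three : meanderSum n (fun a b => (a - b + 1 : ℝ) ^ 3) 0 = 2 ^ n * (1 + 3 * n) := by
    simpa using meanderSum_height_pow_three (R := ℝ) n 0
  have h_five : meanderSum n (fun a b => (a - b + 1 : ℝ) ^ 5) 0 = 2 ^ n * (1 + 15 * n ^ 2) := by
    simpa [add_assoc] using meanderSum_height_pow_five (R := ℝ) n 0
  have h_zero : (halfLineWalks n 0 : ℝ) ≤ 2 ^ n * (1 / s) := by
    rw [← div_le_iff₀' (by positivity)]
    exact (survivalProb_le_sqrt hn).trans (sqrt_two_div_pi_mul_le (by positivity))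
  rw [h_linear]
  simp only [meanderSum_add, meanderSum_mul_left, meanderSum_one, h_one, h_three, h_five]
  calc 4 * (halfLineWalks n 0 : ℝ) + (1 / (2 * s) * 2 ^ n +
        (1 / s ^ 3 * (2 ^ n * (1 + 3 * n)) + 1 / (2 * s ^ 5) * (2 ^ n * (1 + 15 * n ^ 2))))
      ≤ 4 * (2 ^ n * (1 / s)) + (1 / (2 * s) * 2 ^ n +
        (1 / s ^ 3 * (2 ^ n * (n + 3 * n)) +
          1 / (2 * s ^ 5) * (2 ^ n * (n ^ 2 + 15 * n ^ 2)))) := by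
        gcongr
        exact one_le_pow₀ hn'
    _ = 2 ^ n * (33 / 2 / s) := by
        rw [← h_sqrt]
        field_simp
        ring

lemma abs_div_sub_le_iff {K : Type*} [Field K] [LinearOrder K] [IsStrictOrderedRing K]
    {x y c ε : K} (hc : 0 < c) : |x / c - y| ≤ ε ↔ |x - c * y| ≤ c * ε := by
  rw [div_sub' hc.ne', abs_div, abs_of_pos hc, div_le_iff₀' hc]

lemma halfLineWalks_mul_eq {a b : ℕ} (h : a + b = n) :
    ((halfLineWalks a 0 * halfLineWalks b 0 : ℕ) : ℝ) =
      2 ^ n * (survivalProb a * survivalProb b) := by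
  rw [← h, survivalProb, survivalProb, pow_add]
  push_cast
  field_simp

lemma abs_numWalks_octantSteps_sub_survivalProb_le (hn : 0 < n) :
    |numWalks 3 octantSteps n / 4 ^ n - 4 / (π * n) * survivalProb n| ≤
      4 / (π * n) * (33 / 2 / (n * √n)) := by
  have h_walks : (numWalks 3 octantSteps n : ℝ) = meanderSum n
      (fun a b => ((halfLineWalks a 0 * halfLineWalks b 0 : ℕ) : ℝ)) 0 := by
    rw [numWalks_octantSteps]
    exact map_meanderSum (Nat.castAddMonoidHom ℝ) n _ 0
  have h_main : meanderSum n (fun _ _ => 2 ^ n * (4 / (π * n)) * 1) 0 =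
      4 ^ n * (4 / (π * n) * survivalProb n) := by
    rw [meanderSum_mul_left, meanderSum_one, survivalProb, show (4 : ℝ) = 2 * 2 by norm_num,
      mul_pow]
    field_simp
  have h_diff : |numWalks 3 octantSteps n - 4 ^ n * (4 / (π * n) * survivalProb n)| ≤
      2 ^ n * (4 / (π * n)) / n * meanderSum n (productError n) 0 := by
    rw [h_walks, ← h_main, ← meanderSum_mul_left]
    refine abs_meanderSum_sub_le fun a b hab hba => ?_
    rw [halfLineWalks_mul_eq hab, mul_one, ← mul_sub, abs_mul, abs_of_pos (by positivity)]
    calc 2 ^ n * |survivalProb a * survivalProb b - 4 / (π * n)|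
        ≤ 2 ^ n * (4 / (π * n) * (productError n a b / n)) := by
          gcongr
          exact abs_survivalProb_mul_sub_le hn hab (by lia)
      _ = 2 ^ n * (4 / (π * n)) / n * productError n a b := by ring
  have h_four : (4 : ℝ) ^ n = 2 ^ n * 2 ^ n := by rw [← mul_pow]; norm_num
  rw [abs_div_sub_le_iff (by positivity)]
  calc |numWalks 3 octantSteps n - 4 ^ n * (4 / (π * n) * survivalProb n)|
      ≤ 2 ^ n * (4 / (π * n)) / n * (2 ^ n * (33 / 2 / √n)) :=
        h_diff.trans (by gcongr; exact meanderSum_productError_le hn)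
    _ = 4 ^ n * (4 / (π * n) * (33 / 2 / (n * √n))) := by rw [h_four]; ring

theorem abs_numWalks_octantSteps_sub_le (hn : 0 < n) :
    |numWalks 3 octantSteps n / 4 ^ n - 4 / (π * n) * √(2 / (π * n))| ≤
      25 / (n ^ 2 * √n) := by
  calc |numWalks 3 octantSteps n / 4 ^ n - 4 / (π * n) * √(2 / (π * n))|
      ≤ |numWalks 3 octantSteps n / 4 ^ n - 4 / (π * n) * survivalProb n| +
          |4 / (π * n) * survivalProb n - 4 / (π * n) * √(2 / (π * n))| := abs_sub_le _ _ _
    _ ≤ 4 / (π * n) * (33 / 2 / (n * √n)) + 4 / (π * n) * (2 / (n * √n)) := by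
        rw [← mul_sub, abs_mul, abs_of_pos (by positivity : 0 < 4 / (π * n))]
        gcongr
        · exact abs_numWalks_octantSteps_sub_survivalProb_le hn
        · exact abs_survivalProb_sub_sqrt_le hn
    _ = 74 / π * (1 / (n ^ 2 * √n)) := by ring
    _ ≤ 25 * (1 / (n ^ 2 * √n)) := by
        gcongr
        rw [div_le_iff₀ Real.pi_pos]
        linarith [Real.pi_gt_three]
    _ = 25 / (n ^ 2 * √n) := by ring

lemma rpow_natCast_add_half {x : ℝ} (hx : 0 ≤ x) (k : ℕ) :
    x ^ (k + 1 / 2 : ℝ) = x ^ k * √x := by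
  rw [Real.rpow_add_of_nonneg hx k.cast_nonneg (by norm_num), Real.rpow_natCast,
    Real.sqrt_eq_rpow]

end Asymptotics

/-- For the 3D step set `{(±1,0,1), (0,±1,-1)}`, the number of octant walks satisfies
`s_n = (4^n/n^{3/2})(4√2/π^{3/2} + O(1/n))`: the `n^{-1/2}`-order correction term in
the asymptotic expansion vanishes. -/
theorem threeD_example_vanishing_correction :
    ∃ C : ℝ, ∀ᶠ n : ℕ in atTop,
      |(numWalks 3 ({![1, 0, 1], ![-1, 0, 1], ![0, 1, -1], ![0, -1, -1]} :
            Finset (Fin 3 → ℤ)) n : ℝ) -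
          4 ^ n / (n : ℝ) ^ ((3 : ℝ) / 2) * (4 * Real.sqrt 2 / π ^ ((3 : ℝ) / 2))|
        ≤ C * 4 ^ n / (n : ℝ) ^ ((5 : ℝ) / 2) := by
  refine ⟨25, ?_⟩
  filter_upwards [eventually_gt_atTop 0] with n hn
  have hn' : (0 : ℝ) < n := Nat.cast_pos.2 hn
  have h_three_halves {x : ℝ} (hx : 0 ≤ x) : x ^ (3 / 2 : ℝ) = x * √x := by
    simpa [show (1 + 2⁻¹ : ℝ) = 3 / 2 by norm_num] using rpow_natCast_add_half hx 1
  have h_five_halves : (n : ℝ) ^ (5 / 2 : ℝ) = n ^ 2 * √n := by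
    simpa [show (2 + 2⁻¹ : ℝ) = 5 / 2 by norm_num] using rpow_natCast_add_half hn'.le 2
  have h_leading : (4 : ℝ) ^ n / (n * √n) * (4 * √2 / (π * √π)) =
      4 ^ n * (4 / (π * n) * √(2 / (π * n))) := by
    rw [Real.sqrt_div zero_le_two, Real.sqrt_mul Real.pi_pos.le]
    field_simp
  have h_bound := (abs_div_sub_le_iff (by positivity)).1 (abs_numWalks_octantSteps_sub_le hn)
  rw [h_three_halves hn'.le, h_three_halves Real.pi_pos.le, h_five_halves, h_leading]
  exact h_bound.trans_eq (by ring)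

end
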